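/- Let ‖·‖ be a norm on ℝ^d with dual norm ‖g‖_* := sup_{‖x‖≤1} g·x, let K ⊆ ℝ^d be a convex set, and let R : ℝ^d → ℝ be differentiable and 1-strongly convex with respect to ‖·‖ (i.e. R(y) ≥ R(x) + ∇R(x)·(y−x) + ½‖y−x‖² for all x, y ∈ ℝ^d), attaining its global minimum at a point x₀ ∈ K and satisfying R(x) − R(x₀) ≤ D²/2 for all x ∈ K, where D > 0. Let Z₁, …, Z_n be an ℝ^d-valued square-integrable martingale difference sequence (E[Z_i | Z₁, …, Z_{i−1}] = 0, E‖Z_i‖_*² < ∞), and let X be any K-valued random vector, which may depend arbitrarily on Z₁, …, Z_n. Then E[ ( Σ_{i=1}^n Z_i ) · X ] ≤ D · √( Σ_{i=1}^n E‖Z_i‖_*² ). -/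

import Mathlib

open MeasureTheory

/-- The standard dot product on `ℝ^d`. -/
noncomputable def dot {d : ℕ} (g x : Fin d → ℝ) : ℝ := ∑ i, g i * x i

/-- The dual norm `‖g‖_* = sup_{‖x‖ ≤ 1} g·x` of a norm `nrm` on `ℝ^d`. -/
noncomputable def dualNorm {d : ℕ} (nrm : (Fin d → ℝ) → ℝ) (g : Fin d → ℝ) : ℝ :=
  sSup ((fun x => dot g x) '' {x | nrm x ≤ 1})

/-!
Strong convexity of `R` makes its Fenchel conjugate smooth, with gradient the mirror map `G`.
Telescoping the conjugate along the partial sums `S i = ∑ j < i, Z j` gives the pathwise bound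
`(∑ Z i) v ≤ R v - R x₀ + ∑ (Z i (G (S i)) + ‖Z i‖ ^ 2 / 2)` simultaneously for all `v`, which is
why `X` may depend on the `Z i`. Since `G (S i)` is determined by the past, `Z i (G (S i))` has
mean zero. Applied to `l • Z`, this gives `l * x ≤ (D ^ 2 + l ^ 2 * b ^ 2) / 2` for every real `l`,
where `x = E[(∑ Z i) X]` and `b ^ 2 = ∑ E[‖Z i‖ ^ 2]`; hence `x ≤ D * b`.
-/

open Set Filter Topology

section Minimization

variable {X : Type*} [PseudoMetricSpace X] [CompleteSpace X] [Nonempty X] {f : X → ℝ}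

/- The sublevel sets just above the infimum generate a filter, which is Cauchy because two almost
minimizers far apart would have a point strictly below the infimum between them. -/
lemma exists_forall_le_of_midpoint_gap {c : ℝ} (hc : 0 < c) (hf : Continuous f)
    (hbdd : BddBelow (range f))
    (hmid : ∀ x y, ∃ z, f z + c * dist x y ^ 2 ≤ (f x + f y) / 2) :
    ∃ x, ∀ y, f x ≤ f y := by
  set m := ⨅ x, f x
  have hm : ∀ x, m ≤ f x := ciInf_le hbdd
  have hne : (comap f (𝓝 m)).NeBot :=
    comap_neBot_iff_frequently.2 (mem_closure_iff_frequently.1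
      (csInf_mem_closure (range_nonempty f) hbdd))
  have hcauchy : Cauchy (comap f (𝓝 m)) := by
    refine Metric.cauchy_iff.2 ⟨hne, fun ε hε => ?_⟩
    have hgap : m < m + c * ε ^ 2 := lt_add_of_pos_right m (by positivity)
    refine ⟨f ⁻¹' Iio (m + c * ε ^ 2), preimage_mem_comap (Iio_mem_nhds hgap),
      fun x hx y hy => ?_⟩
    obtain ⟨z, hz⟩ := hmid x y
    simp only [mem_preimage, mem_Iio] at hx hy
    exact lt_of_pow_lt_pow_left₀ 2 hε.le (lt_of_mul_lt_mul_left (by linarith [hm z]) hc.le)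
  obtain ⟨x, hx⟩ := CompleteSpace.complete hcauchy
  have hfx : f x = m :=
    tendsto_nhds_unique ((hf.tendsto x).mono_left hx) tendsto_comap
  exact ⟨x, fun y => hfx.trans_le (hm y)⟩

end Minimization

section Duality

variable {E : Type*} [NormedAddCommGroup E] [NormedSpace ℝ E] {R : E → ℝ}

lemma exists_forall_sub_apply_le_of_strongConvex [CompleteSpace E] (hR : Differentiable ℝ R)
    (hRsc : ∀ x y, R x + fderiv ℝ R x (y - x) + 1 / 2 * ‖y - x‖ ^ 2 ≤ R y)
    (g : StrongDual ℝ E) : ∃ x, ∀ y, R x - g x ≤ R y - g y := by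
  refine exists_forall_le_of_midpoint_gap (c := 1 / 8) (by norm_num)
    (hR.continuous.sub g.continuous) ?_ fun x y => ?_
  · set L := fderiv ℝ R 0 - g with hL
    refine ⟨R 0 - 1 / 2 * ‖L‖ ^ 2, ?_⟩
    rintro _ ⟨y, rfl⟩
    have hsc := hRsc 0 y
    have hLy : -(‖L‖ * ‖y‖) ≤ L y := neg_le_of_abs_le (L.le_opNorm y)
    simp only [sub_zero, hL, sub_apply] at hsc hLy ⊢
    nlinarith [sq_nonneg (‖fderiv ℝ R 0 - g‖ - ‖y‖)]
  · set z := midpoint ℝ x y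
    have hx := hRsc z x
    have hy := hRsc z y
    have hz : y - z = -(x - z) := by
      simp only [z, right_sub_midpoint, left_sub_midpoint, ← smul_neg, neg_sub]
    have hgz : g z = (g x + g y) / 2 := by
      simp only [z, midpoint_eq_smul_add, map_smul, map_add, invOf_eq_inv, smul_eq_mul]
      ring
    have hxz : ‖x - z‖ = dist x y / 2 := by
      rw [← dist_eq_norm, dist_left_midpoint]
      norm_num
      ring
    rw [hz, map_neg, norm_neg] at hy
    rw [hxz] at hx hy
    exact ⟨z, by linarith⟩

/-- `G : E* → E` is a mirror map of `R`: it sends `g` to the maximizer of `g - R`, with the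
quadratic gap that strong convexity of `R` provides. In other words, `G` is the gradient of the
Fenchel conjugate of `R`. -/
def IsMirrorMap (R : E → ℝ) (G : StrongDual ℝ E → E) : Prop :=
  ∀ g y, R (G g) + g (y - G g) + 1 / 2 * ‖y - G g‖ ^ 2 ≤ R y

/-- The Fenchel conjugate `R*(g) = sup_x (g x - R x)`. As a real supremum it is meaningful only
where `g - R` is bounded above, which holds everywhere if `R` has a mirror map. -/
noncomputable def fenchelConjugate (R : E → ℝ) (g : StrongDual ℝ E) : ℝ := ⨆ x, g x - R x

lemma exists_isMirrorMap [CompleteSpace E] (hR : Differentiable ℝ R)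
    (hRsc : ∀ x y, R x + fderiv ℝ R x (y - x) + 1 / 2 * ‖y - x‖ ^ 2 ≤ R y) :
    ∃ G, IsMirrorMap R G := by
  choose G hG using exists_forall_sub_apply_le_of_strongConvex hR hRsc
  refine ⟨G, fun g y => ?_⟩
  have hmin : IsLocalMin (fun y => R y - g y) (G g) := Eventually.of_forall (hG g)
  have hderiv : fderiv ℝ R (G g) = g :=
    sub_eq_zero.1 (hmin.hasFDerivAt_eq_zero ((hR (G g)).hasFDerivAt.sub g.hasFDerivAt))
  simpa only [hderiv] using hRsc (G g) y

lemma norm_sub_le_of_strongConvex_of_forall_le {x x₀ : E} {D : ℝ}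
    (hRsc : ∀ y, R x₀ + fderiv ℝ R x₀ (y - x₀) + 1 / 2 * ‖y - x₀‖ ^ 2 ≤ R y)
    (hx₀ : ∀ y, R x₀ ≤ R y) (hD : 0 ≤ D) (hx : R x - R x₀ ≤ D ^ 2 / 2) : ‖x - x₀‖ ≤ D := by
  have hmin : IsLocalMin R x₀ := Eventually.of_forall hx₀
  have hgap := hRsc x
  rw [hmin.fderiv_eq_zero, zero_apply] at hgap
  exact le_of_sq_le_sq (by linarith) hD

lemma fenchelConjugate_zero_le {x₀ : E} (hx₀ : ∀ x, R x₀ ≤ R x) :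
    fenchelConjugate R 0 ≤ -R x₀ :=
  ciSup_le fun x => by simpa using hx₀ x

namespace IsMirrorMap

variable {G : StrongDual ℝ E → E}

lemma isGreatest (hG : IsMirrorMap R G) (g : StrongDual ℝ E) :
    IsGreatest (range fun x => g x - R x) (g (G g) - R (G g)) := by
  refine ⟨mem_range_self _, ?_⟩
  rintro _ ⟨y, rfl⟩
  have hgap := hG g y
  rw [map_sub] at hgap
  linarith [sq_nonneg ‖y - G g‖]

lemma fenchelConjugate_eq (hG : IsMirrorMap R G) (g : StrongDual ℝ E) :
    fenchelConjugate R g = g (G g) - R (G g) :=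
  (hG.isGreatest g).csSup_eq

lemma apply_le_fenchelConjugate_add (hG : IsMirrorMap R G) (g : StrongDual ℝ E) (x : E) :
    g x ≤ fenchelConjugate R g + R x :=
  sub_le_iff_le_add.1 (le_ciSup (hG.isGreatest g).bddAbove x)

lemma lipschitzWith (hG : IsMirrorMap R G) : LipschitzWith 1 G := by
  refine LipschitzWith.mk_one fun g h => ?_
  simp only [dist_eq_norm]
  have hgap : ‖G g - G h‖ ^ 2 ≤ (g - h) (G g - G h) := by
    have hg := hG g (G h)
    have hh := hG h (G g)
    rw [norm_sub_rev (G h)] at hg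
    simp only [map_sub, sub_apply] at hg hh ⊢
    linarith
  have hop : (g - h) (G g - G h) ≤ ‖g - h‖ * ‖G g - G h‖ :=
    (le_abs_self _).trans ((g - h).le_opNorm _)
  rcases (norm_nonneg (G g - G h)).eq_or_lt with h0 | hpos
  · exact h0 ▸ norm_nonneg _
  · exact le_of_mul_le_mul_right (by linarith [sq ‖G g - G h‖]) hpos

/- Strong convexity of `R` turns into smoothness of the conjugate: the quadratic gap absorbs the
displacement of the maximizer, by `ab ≤ (a² + b²) / 2`. -/
lemma fenchelConjugate_add_le (hG : IsMirrorMap R G) (g h : StrongDual ℝ E) :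
    fenchelConjugate R (g + h) ≤ fenchelConjugate R g + (h (G g) + 1 / 2 * ‖h‖ ^ 2) := by
  have hgap := hG g (G (g + h))
  have hop : h (G (g + h) - G g) ≤ ‖h‖ * ‖G (g + h) - G g‖ :=
    (le_abs_self _).trans (h.le_opNorm _)
  rw [hG.fenchelConjugate_eq, hG.fenchelConjugate_eq, add_apply]
  rw [map_sub] at hgap hop
  nlinarith [sq_nonneg (‖h‖ - ‖G (g + h) - G g‖)]

lemma fenchelConjugate_sum_le (hG : IsMirrorMap R G) (g : ℕ → StrongDual ℝ E) (n : ℕ) :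
    fenchelConjugate R (∑ i ∈ Finset.range n, g i) ≤ fenchelConjugate R 0 +
      ∑ i ∈ Finset.range n, (g i (G (∑ j ∈ Finset.range i, g j)) + 1 / 2 * ‖g i‖ ^ 2) := by
  induction n with
  | zero => simp
  | succ n ih =>
    rw [Finset.sum_range_succ, Finset.sum_range_succ, ← add_assoc]
    exact (hG.fenchelConjugate_add_le _ _).trans (by gcongr)

lemma sum_apply_le (hG : IsMirrorMap R G) {x₀ : E} (hx₀ : ∀ x, R x₀ ≤ R x)
    (g : ℕ → StrongDual ℝ E) (n : ℕ) (x : E) :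
    (∑ i ∈ Finset.range n, g i) x ≤ R x - R x₀ +
      ∑ i ∈ Finset.range n, (g i (G (∑ j ∈ Finset.range i, g j)) + 1 / 2 * ‖g i‖ ^ 2) := by
  linarith [hG.apply_le_fenchelConjugate_add (∑ i ∈ Finset.range n, g i) x,
    hG.fenchelConjugate_sum_le g n, fenchelConjugate_zero_le hx₀]

end IsMirrorMap

end Duality

section MartingaleDifferences

variable {Ω : Type*} {mΩ : MeasurableSpace Ω} {μ : Measure Ω}

lemma memLp_lipschitz_comp {E F : Type*} [NormedAddCommGroup E] [NormedAddCommGroup F]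
    [IsFiniteMeasure μ] {p : ENNReal} {C : NNReal} {g : E → F} {f : Ω → E}
    (hg : LipschitzWith C g) (hf : MemLp f p μ) :
    MemLp (fun ω => g (f ω)) p μ := by
  have hg0 : LipschitzWith (C + 0) fun x => g x - g 0 := hg.sub (LipschitzWith.const _)
  simpa [Function.comp_def, Pi.add_def] using
    (hg0.comp_memLp (sub_self _) hf).add (memLp_const (g 0))

variable {F : Type*} [NormedAddCommGroup F] [NormedSpace ℝ F]

/-- `Z 0, …, Z (n - 1)` is a martingale difference sequence with respect to the σ-algebras
`𝓕 0, …, 𝓕 (n - 1)`, where `𝓕 i` represents the information available strictly before `Z i` is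
revealed. Only finitely many terms are constrained, so that no `Filtration` indexed by `ℕ` has to be
supplied. Integrability of the `Z i`, without which the last condition is junk, is assumed
separately. -/
structure IsMartingaleDiff (Z : ℕ → Ω → F) (𝓕 : ℕ → MeasurableSpace Ω) (n : ℕ)
    (μ : Measure Ω) : Prop where
  le : ∀ i < n, 𝓕 i ≤ mΩ
  stronglyMeasurable : ∀ i < n, ∀ j < i, StronglyMeasurable[𝓕 i] (Z j)
  condExp_eq_zero : ∀ i < n, μ[Z i | 𝓕 i] =ᵐ[μ] 0

lemma IsMartingaleDiff.map {F' : Type*} [NormedAddCommGroup F'] [NormedSpace ℝ F']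
    [CompleteSpace F] [CompleteSpace F'] {Z : ℕ → Ω → F} {𝓕 : ℕ → MeasurableSpace Ω} {n : ℕ}
    (hZ : IsMartingaleDiff Z 𝓕 n μ) (hZ_int : ∀ i < n, Integrable (Z i) μ) (T : F →L[ℝ] F') :
    IsMartingaleDiff (fun i ω => T (Z i ω)) 𝓕 n μ where
  le := hZ.le
  stronglyMeasurable i hi j hj :=
    T.continuous.comp_stronglyMeasurable (hZ.stronglyMeasurable i hi j hj)
  condExp_eq_zero i hi := by
    filter_upwards [T.comp_condExp_comm (m := 𝓕 i) (hZ_int i hi), hZ.condExp_eq_zero i hi]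
      with ω hT h0
    exact hT.symm.trans (by simp [h0])

variable {E : Type*} [NormedAddCommGroup E] [NormedSpace ℝ E]

lemma integrable_dual_apply {W : Ω → StrongDual ℝ E} {f : Ω → E} (hW : MemLp W 2 μ)
    (hf : MemLp f 2 μ) : Integrable (fun ω => W ω (f ω)) μ :=
  memLp_one_iff_integrable.1 ((ContinuousLinearMap.id ℝ (StrongDual ℝ E)).memLp_of_bilin 1 hW hf)

lemma integral_dual_apply_eq_zero {m : MeasurableSpace Ω} (hm : m ≤ mΩ) [IsFiniteMeasure μ]
    {W : Ω → StrongDual ℝ E} {f : Ω → E} (hW : MemLp W 2 μ) (hf : MemLp f 2 μ)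
    (hfm : StronglyMeasurable[m] f) (hW0 : μ[W | m] =ᵐ[μ] 0) : ∫ ω, W ω (f ω) ∂μ = 0 := by
  have hpull := condExp_bilin_of_aestronglyMeasurable_right (ContinuousLinearMap.id ℝ _)
    hfm.aestronglyMeasurable (integrable_dual_apply hW hf) (hW.integrable one_le_two)
  rw [← integral_condExp hm]
  refine integral_eq_zero_of_ae ?_
  filter_upwards [hpull, hW0] with ω hω h0
  exact hω.trans (by simp [h0])

lemma le_mul_of_forall_mul_le {x a b : ℝ} (ha : 0 ≤ a) (hb : 0 ≤ b)
    (h : ∀ l : ℝ, l * x ≤ a ^ 2 / 2 + 1 / 2 * (l ^ 2 * b ^ 2)) : x ≤ a * b := by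
  have hdiscrim : discrim (b ^ 2) (-2 * x) (a ^ 2) ≤ 0 :=
    discrim_le_zero fun l => by linarith [h l]
  rw [discrim] at hdiscrim
  exact (abs_le_of_sq_le_sq' (by linarith) (mul_nonneg ha hb)).2

section BanachSpace

variable {R : E → ℝ} {G : StrongDual ℝ E → E} {x₀ : E} {D : ℝ} {n i : ℕ} {X : Ω → E}
  {Z : ℕ → Ω → StrongDual ℝ E} {𝓕 : ℕ → MeasurableSpace Ω}

namespace IsMirrorMap

lemma memLp_comp_sum [IsFiniteMeasure μ] (hG : IsMirrorMap R G) (hZ2 : ∀ j < i, MemLp (Z j) 2 μ) :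
    MemLp (fun ω => G (∑ j ∈ Finset.range i, Z j ω)) 2 μ :=
  memLp_lipschitz_comp hG.lipschitzWith
    (memLp_finsetSum (f := Z) _ fun j hj => hZ2 j (Finset.mem_range.1 hj))

lemma integrable_apply_comp_sum [IsFiniteMeasure μ] (hG : IsMirrorMap R G)
    (hZ2 : ∀ j ≤ i, MemLp (Z j) 2 μ) :
    Integrable (fun ω => Z i ω (G (∑ j ∈ Finset.range i, Z j ω))) μ :=
  integrable_dual_apply (hZ2 i le_rfl) (hG.memLp_comp_sum fun j hj => hZ2 j hj.le)

end IsMirrorMap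

namespace IsMartingaleDiff

lemma integral_apply_comp_sum_eq_zero [IsFiniteMeasure μ] (hZ : IsMartingaleDiff Z 𝓕 n μ)
    (hG : IsMirrorMap R G) (hi : i < n) (hZ2 : ∀ j ≤ i, MemLp (Z j) 2 μ) :
    ∫ ω, Z i ω (G (∑ j ∈ Finset.range i, Z j ω)) ∂μ = 0 := by
  have hpast : StronglyMeasurable[𝓕 i] fun ω => ∑ j ∈ Finset.range i, Z j ω :=
    Finset.stronglyMeasurable_fun_sum _ fun j hj =>
      hZ.stronglyMeasurable i hi j (Finset.mem_range.1 hj)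
  exact integral_dual_apply_eq_zero (hZ.le i hi) (hZ2 i le_rfl)
    (hG.memLp_comp_sum fun j hj => hZ2 j hj.le)
    (hG.lipschitzWith.continuous.comp_stronglyMeasurable hpast) (hZ.condExp_eq_zero i hi)

lemma integral_sum_apply_le_add [IsProbabilityMeasure μ] (hZ : IsMartingaleDiff Z 𝓕 n μ)
    (hG : IsMirrorMap R G) (hZ2 : ∀ i < n, MemLp (Z i) 2 μ) (hx₀ : ∀ x, R x₀ ≤ R x)
    (hX2 : MemLp X 2 μ) (hRX : ∀ᵐ ω ∂μ, R (X ω) - R x₀ ≤ D ^ 2 / 2) :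
    ∫ ω, (∑ i ∈ Finset.range n, Z i ω) (X ω) ∂μ ≤
      D ^ 2 / 2 + 1 / 2 * ∑ i ∈ Finset.range n, ∫ ω, ‖Z i ω‖ ^ 2 ∂μ := by
  have hZ2_le : ∀ i ∈ Finset.range n, ∀ j ≤ i, MemLp (Z j) 2 μ := fun i hi j hj =>
    hZ2 j (hj.trans_lt (Finset.mem_range.1 hi))
  have hcross_int : ∀ i ∈ Finset.range n,
      Integrable (fun ω => Z i ω (G (∑ j ∈ Finset.range i, Z j ω))) μ := fun i hi =>
    hG.integrable_apply_comp_sum (hZ2_le i hi)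
  have hsq_int : ∀ i ∈ Finset.range n, Integrable (fun ω => 1 / 2 * ‖Z i ω‖ ^ 2) μ := fun i hi =>
    ((hZ2_le i hi i le_rfl).integrable_norm_pow two_ne_zero).const_mul _
  have hterm_int := fun i hi => (hcross_int i hi).fun_add (hsq_int i hi)
  have hsum_int := integrable_finsetSum _ hterm_int
  have hleft_int : Integrable (fun ω => (∑ i ∈ Finset.range n, Z i ω) (X ω)) μ :=
    integrable_dual_apply (memLp_finsetSum (f := Z) _ fun i hi => hZ2_le i hi i le_rfl) hX2
  calc ∫ ω, (∑ i ∈ Finset.range n, Z i ω) (X ω) ∂μ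
      ≤ ∫ ω, (D ^ 2 / 2 + ∑ i ∈ Finset.range n,
          (Z i ω (G (∑ j ∈ Finset.range i, Z j ω)) + 1 / 2 * ‖Z i ω‖ ^ 2)) ∂μ := by
        refine integral_mono_ae hleft_int ((integrable_const _).add hsum_int) ?_
        filter_upwards [hRX] with ω hω
        linarith [hG.sum_apply_le hx₀ (fun i => Z i ω) n (X ω)]
    _ = D ^ 2 / 2 + ∑ i ∈ Finset.range n, (∫ ω, Z i ω (G (∑ j ∈ Finset.range i, Z j ω)) ∂μ +
          ∫ ω, 1 / 2 * ‖Z i ω‖ ^ 2 ∂μ) := by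
        rw [integral_add (integrable_const _) hsum_int, integral_const, probReal_univ, one_smul,
          integral_finsetSum _ hterm_int,
          Finset.sum_congr rfl fun i hi => integral_add (hcross_int i hi) (hsq_int i hi)]
    _ = D ^ 2 / 2 + ∑ i ∈ Finset.range n, 1 / 2 * ∫ ω, ‖Z i ω‖ ^ 2 ∂μ := by
        congr 1
        refine Finset.sum_congr rfl fun i hi => ?_
        rw [hZ.integral_apply_comp_sum_eq_zero hG (Finset.mem_range.1 hi) (hZ2_le i hi), zero_add,
          integral_const_mul]
    _ = D ^ 2 / 2 + 1 / 2 * ∑ i ∈ Finset.range n, ∫ ω, ‖Z i ω‖ ^ 2 ∂μ := by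
        rw [Finset.mul_sum]

theorem integral_sum_apply_le [CompleteSpace E] [IsProbabilityMeasure μ]
    (hZ : IsMartingaleDiff Z 𝓕 n μ) (hZ2 : ∀ i < n, MemLp (Z i) 2 μ)
    (hR : Differentiable ℝ R)
    (hRsc : ∀ x y, R x + fderiv ℝ R x (y - x) + 1 / 2 * ‖y - x‖ ^ 2 ≤ R y)
    (hx₀ : ∀ x, R x₀ ≤ R x) (hD : 0 ≤ D) (hX : AEStronglyMeasurable X μ)
    (hRX : ∀ᵐ ω ∂μ, R (X ω) - R x₀ ≤ D ^ 2 / 2) :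
    ∫ ω, (∑ i ∈ Finset.range n, Z i ω) (X ω) ∂μ ≤
      D * √(∑ i ∈ Finset.range n, ∫ ω, ‖Z i ω‖ ^ 2 ∂μ) := by
  obtain ⟨G, hG⟩ := exists_isMirrorMap hR hRsc
  have hX2 : MemLp X 2 μ := by
    refine MemLp.of_bound hX (D + ‖x₀‖) (hRX.mono fun ω hω => ?_)
    have hdist := norm_sub_le_of_strongConvex_of_forall_le (hRsc x₀) hx₀ hD hω
    linarith [norm_sub_norm_le (X ω) x₀]
  refine le_mul_of_forall_mul_le hD (Real.sqrt_nonneg _) fun l => ?_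
  have hlZ := hZ.map (fun i hi => (hZ2 i hi).integrable one_le_two)
    (l • ContinuousLinearMap.id ℝ (StrongDual ℝ E))
  have hscaled :=
    hlZ.integral_sum_apply_le_add hG (fun i hi => (hZ2 i hi).const_smul l) hx₀ hX2 hRX
  rw [Real.sq_sqrt (Finset.sum_nonneg fun i _ => integral_nonneg fun ω => sq_nonneg _)]
  simpa only [smul_apply, ContinuousLinearMap.id_apply, ← Finset.smul_sum, smul_eq_mul, norm_smul,
    mul_pow, Real.norm_eq_abs, sq_abs, integral_const_mul, ← Finset.mul_sum] using hscaled

end IsMartingaleDiff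

end BanachSpace

end MartingaleDifferences

section Coordinates

lemma exists_linearEquiv_norm_eq.{u} {E : Type u} [AddCommGroup E] [Module ℝ E] {nrm : E → ℝ}
    (hn0 : ∀ z, 0 ≤ nrm z) (hndef : ∀ z, nrm z = 0 ↔ z = 0)
    (hnsmul : ∀ (c : ℝ) z, nrm (c • z) = |c| * nrm z)
    (hntri : ∀ z w, nrm (z + w) ≤ nrm z + nrm w) :
    ∃ (V : Type u) (_ : NormedAddCommGroup V) (_ : NormedSpace ℝ V) (e : E ≃ₗ[ℝ] V),
      ∀ z, ‖e z‖ = nrm z := by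
  let _ : Norm E := ⟨nrm⟩
  have core : NormedSpace.Core ℝ E := ⟨⟨hn0, hnsmul, hntri⟩, hndef⟩
  let normedGroup : NormedAddCommGroup E := .ofCore core
  let normedSpace : NormedSpace ℝ E := .ofCore core
  exact ⟨E, normedGroup, normedSpace, LinearEquiv.refl ℝ E, fun _ => rfl⟩

variable {d : ℕ} {V : Type*} [NormedAddCommGroup V] [NormedSpace ℝ V]

lemma sSup_image_unitClosedBall_eq_norm (f : StrongDual ℝ V) : sSup (f '' {x | ‖x‖ ≤ 1}) = ‖f‖ := by
  have hub : ‖f‖ ∈ upperBounds (f '' {x | ‖x‖ ≤ 1}) := by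
    rintro _ ⟨x, hx, rfl⟩
    exact (le_abs_self _).trans (f.unit_le_opNorm x hx)
  refine (IsLUB.csSup_eq ⟨hub, fun b hb => ?_⟩ ⟨f 0, 0, by simp, rfl⟩)
  have hb' : ∀ x, ‖x‖ ≤ 1 → f x ≤ b := fun x hx => hb (mem_image_of_mem f hx)
  have hb0 : 0 ≤ b := by simpa using hb' 0 (by simp)
  refine f.opNorm_le_of_unit_norm hb0 fun x hx => abs_le.2 ⟨?_, hb' x hx.le⟩
  linarith [hb' (-x) (by rw [norm_neg, hx]), map_neg f x]

/-- The dot product seen through a linear isomorphism `e : ℝ^d ≃ V`: the map sending `g` to the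
functional `v ↦ g · e⁻¹ v` on `V`. -/
noncomputable def dotDual (e : (Fin d → ℝ) ≃L[ℝ] V) : (Fin d → ℝ) →L[ℝ] StrongDual ℝ V :=
  (ContinuousLinearMap.precomp ℝ (e.symm : V →L[ℝ] Fin d → ℝ)) ∘L
    (LinearMap.mk₂ ℝ dot add_dotProduct smul_dotProduct dotProduct_add
      fun c g x => dotProduct_smul c g x).toContinuousBilinearMap

lemma dotDual_apply (e : (Fin d → ℝ) ≃L[ℝ] V) (g : Fin d → ℝ) (v : V) :
    dotDual e g v = dot g (e.symm v) := rfl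

lemma norm_dotDual (e : (Fin d → ℝ) ≃L[ℝ] V) (g : Fin d → ℝ) :
    ‖dotDual e g‖ = dualNorm (fun z => ‖e z‖) g := by
  rw [← sSup_image_unitClosedBall_eq_norm, dualNorm]
  congr 1
  ext r
  simp only [mem_image, mem_ofPred_eq, dotDual_apply, e.symm.surjective.exists, e.apply_symm_apply]

lemma exists_antilipschitzWith_dotDual (e : (Fin d → ℝ) ≃L[ℝ] V) :
    ∃ C, AntilipschitzWith C (dotDual e) := by
  have hker : LinearMap.ker (dotDual e : (Fin d → ℝ) →ₗ[ℝ] StrongDual ℝ V) = ⊥ := by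
    refine LinearMap.ker_eq_bot'.2 fun g hg => dotProduct_eq_zero g fun x => ?_
    simpa [dotDual_apply, dot, dotProduct] using congr($hg (e x))
  obtain ⟨C, -, hC⟩ := LinearMap.exists_antilipschitzWith _ hker
  exact ⟨C, hC⟩

lemma strongConvex_comp_symm {E : Type*} [NormedAddCommGroup E] [NormedSpace ℝ E]
    (e : E ≃L[ℝ] V) {R : E → ℝ}
    (hRsc : ∀ x y, R x + fderiv ℝ R x (y - x) + 1 / 2 * ‖e (y - x)‖ ^ 2 ≤ R y) (x y : V) :
    (R ∘ e.symm) x + fderiv ℝ (R ∘ e.symm) x (y - x) + 1 / 2 * ‖y - x‖ ^ 2 ≤ (R ∘ e.symm) y := by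
  simpa [e.symm.comp_right_fderiv, ← map_sub] using hRsc (e.symm x) (e.symm y)

end Coordinates

theorem martingale_dot_concentration_general {d : ℕ}
    (nrm : (Fin d → ℝ) → ℝ)
    (hn0 : ∀ z, 0 ≤ nrm z) (hndef : ∀ z, nrm z = 0 ↔ z = 0)
    (hnsmul : ∀ (c : ℝ) z, nrm (c • z) = |c| * nrm z)
    (hntri : ∀ z w, nrm (z + w) ≤ nrm z + nrm w)
    (R : (Fin d → ℝ) → ℝ) (hRdiff : Differentiable ℝ R)
    (hRsc : ∀ x y : Fin d → ℝ,
      R x + fderiv ℝ R x (y - x) + (1 / 2) * (nrm (y - x)) ^ 2 ≤ R y)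
    (x₀ : Fin d → ℝ) (hx₀min : ∀ x : Fin d → ℝ, R x₀ ≤ R x) (D : ℝ) (hD : 0 ≤ D)
    {Ω : Type*} [MeasurableSpace Ω] (μ : Measure Ω) [IsProbabilityMeasure μ]
    (n : ℕ) (Z : ℕ → Ω → Fin d → ℝ) (𝓕 : ℕ → MeasurableSpace Ω)
    (hZ : IsMartingaleDiff Z 𝓕 n μ) (hZmeas : ∀ i < n, AEStronglyMeasurable (Z i) μ)
    (hZL2 : ∀ i < n, Integrable (fun ω => (dualNorm nrm (Z i ω)) ^ 2) μ)
    (X : Ω → Fin d → ℝ) (hX : AEStronglyMeasurable X μ)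
    (hRX : ∀ᵐ ω ∂μ, R (X ω) - R x₀ ≤ D ^ 2 / 2) :
    ∫ ω, dot (∑ i ∈ Finset.range n, Z i ω) (X ω) ∂μ ≤
      D * √(∑ i ∈ Finset.range n, ∫ ω, (dualNorm nrm (Z i ω)) ^ 2 ∂μ) := by
  obtain ⟨V, _, _, e', he'⟩ := exists_linearEquiv_norm_eq hn0 hndef hnsmul hntri
  have : FiniteDimensional ℝ V := e'.finiteDimensional
  have : CompleteSpace V := FiniteDimensional.complete ℝ V
  let e := e'.toContinuousLinearEquiv
  obtain rfl : nrm = fun z => ‖e z‖ := funext fun z => (he' z).symm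
  simp only [← norm_dotDual] at hZL2 ⊢
  have hdual2 : ∀ i < n, MemLp (fun ω => dotDual e (Z i ω)) 2 μ := fun i hi =>
    (memLp_two_iff_integrable_sq_norm
      ((dotDual e).continuous.comp_aestronglyMeasurable (hZmeas i hi))).2 (hZL2 i hi)
  obtain ⟨C, hC⟩ := exists_antilipschitzWith_dotDual e
  have hZ_int : ∀ i < n, Integrable (Z i) μ := fun i hi =>
    ((hdual2 i hi).of_comp_antilipschitzWith (dotDual e).uniformContinuous hC
      (map_zero _)).integrable one_le_two
  have hbound := (hZ.map hZ_int (dotDual e)).integral_sum_apply_le hdual2 (R := R ∘ e.symm)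
    (x₀ := e x₀) (X := fun ω => e (X ω)) (D := D) (hRdiff.comp e.symm.differentiable)
    (strongConvex_comp_symm e hRsc) (by simpa using fun x => hx₀min (e.symm x)) hD
    (e.continuous.comp_aestronglyMeasurable hX) (by simpa using hRX)
  simpa only [← map_sum, dotDual_apply, e.symm_apply_apply] using hbound

lemma isMartingaleDiff_natural {Ω F : Type*} [MeasurableSpace Ω] {μ : Measure Ω}
    [NormedAddCommGroup F] [NormedSpace ℝ F] [MeasurableSpace F] [OpensMeasurableSpace F]
    [SecondCountableTopology F] {n : ℕ} {Z : ℕ → Ω → F}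
    (hZmeas : ∀ i ∈ Finset.Icc 1 n, Measurable (Z i))
    (hmds : ∀ i ∈ Finset.Icc 1 n,
      μ[Z i | ⨆ j ∈ Finset.Ico 1 i, MeasurableSpace.comap (Z j) inferInstance] =ᵐ[μ] 0) :
    IsMartingaleDiff (fun i => Z (i + 1))
      (fun i => ⨆ j ∈ Finset.Ico 1 (i + 1), MeasurableSpace.comap (Z j) inferInstance) n μ where
  le i hi := iSup₂_le fun j hj => (hZmeas j (by
    simp only [Finset.mem_Ico, Finset.mem_Icc] at hj ⊢
    omega)).comap_le
  stronglyMeasurable i _ j hj := by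
    have hle : MeasurableSpace.comap (Z (j + 1)) inferInstance ≤
        ⨆ k ∈ Finset.Ico 1 (i + 1), MeasurableSpace.comap (Z k) inferInstance :=
      le_iSup₂_of_le (j + 1) (by simpa using hj) le_rfl
    exact (measurable_iff_comap_le.2 hle).stronglyMeasurable
  condExp_eq_zero i hi := hmds (i + 1) (by simpa using hi)

lemma sum_Icc_one_eq_sum_range {M : Type*} [AddCommMonoid M] (f : ℕ → M) (n : ℕ) :
    ∑ i ∈ Finset.Icc 1 n, f i = ∑ i ∈ Finset.range n, f (i + 1) := by
  rw [Finset.range_eq_Ico, Finset.sum_Ico_add' f 0 n 1]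
  rfl

/-- Concentration for martingale difference sequences against an
arbitrary (possibly dependent) `K`-valued random vector:
`E[(Σᵢ Zᵢ)·X] ≤ D √(Σᵢ E‖Zᵢ‖_*²)`. -/
theorem martingale_dot_concentration {d : ℕ}
    (nrm : (Fin d → ℝ) → ℝ)
    (hn0 : ∀ z, 0 ≤ nrm z) (hndef : ∀ z, nrm z = 0 ↔ z = 0)
    (hnsmul : ∀ (c : ℝ) z, nrm (c • z) = |c| * nrm z)
    (hntri : ∀ z w, nrm (z + w) ≤ nrm z + nrm w)
    (K : Set (Fin d → ℝ)) (hKconv : Convex ℝ K)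
    (R : (Fin d → ℝ) → ℝ) (hRdiff : Differentiable ℝ R)
    (hRsc : ∀ x y : Fin d → ℝ,
      R x + fderiv ℝ R x (y - x) + (1 / 2) * (nrm (y - x)) ^ 2 ≤ R y)
    (x₀ : Fin d → ℝ) (hx₀K : x₀ ∈ K) (hx₀min : ∀ x : Fin d → ℝ, R x₀ ≤ R x)
    (D : ℝ) (hD : 0 < D) (hRD : ∀ x ∈ K, R x - R x₀ ≤ D ^ 2 / 2)
    {Ω : Type*} [MeasurableSpace Ω] (μ : Measure Ω) [IsProbabilityMeasure μ]
    (n : ℕ) (Z : ℕ → Ω → Fin d → ℝ)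
    (hZmeas : ∀ i ∈ Finset.Icc 1 n, Measurable (Z i))
    (hZL2 : ∀ i ∈ Finset.Icc 1 n, Integrable (fun ω => (dualNorm nrm (Z i ω)) ^ 2) μ)
    (hmds : ∀ i ∈ Finset.Icc 1 n,
      μ[Z i | ⨆ j ∈ Finset.Ico 1 i, MeasurableSpace.comap (Z j) inferInstance] =ᵐ[μ] 0)
    (X : Ω → Fin d → ℝ) (hXmeas : Measurable X) (hXK : ∀ ω, X ω ∈ K) :
    ∫ ω, dot (∑ i ∈ Finset.Icc 1 n, Z i ω) (X ω) ∂μ ≤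
      D * Real.sqrt (∑ i ∈ Finset.Icc 1 n, ∫ ω, (dualNorm nrm (Z i ω)) ^ 2 ∂μ) := by
  have hIcc : ∀ i < n, i + 1 ∈ Finset.Icc 1 n := by simp
  simpa only [sum_Icc_one_eq_sum_range] using
    martingale_dot_concentration_general nrm hn0 hndef hnsmul hntri R hRdiff hRsc x₀ hx₀min D hD.le
      μ n (fun i => Z (i + 1)) _ (isMartingaleDiff_natural hZmeas hmds)
      (fun i hi => (hZmeas _ (hIcc i hi)).aestronglyMeasurable) (fun i hi => hZL2 _ (hIcc i hi))
      X hXmeas.aestronglyMeasurable (ae_of_all μ fun ω => hRD _ (hXK ω))
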